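/- arXiv:2101.09610 — 10 statements merged into one kernel-verified Lean document; each statement's English description precedes it below -/
import Mathlib

section
/- Fix an integer n ≥ 1 and real numbers α ≥ 0, γ > 0, Q₁₁ ≥ 0, Q₂₂ ≥ 0, and Q₁₂ ∈ ℝ. Define P₁₂ = (−1 + √(1 + γ²Q₁₁/(n²π²)))/γ², P₂₂ = (−α + √(α² + n²π²γ²(Q₂₂ + 2P₁₂)))/(n²π²γ²), and P₁₁ = αP₁₂ + n²π²(1 + γ²P₁₂)P₂₂ − Q₁₂. Then P₁₂ ≥ 0, P₂₂ ≥ 0, and these values satisfy the coupled algebraic Riccati equations: 0 = −2n²π²P₁₂ + Q₁₁ − n²π²γ²P₁₂², 0 = P₁₁ − αP₁₂ − n²π²P₂₂ + Q₁₂ − n²π²γ²P₁₂P₂₂, and 0 = 2P₁₂ − 2αP₂₂ + Q₂₂ − n²π²γ²P₂₂². -/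
/-- The explicit formulas for `P₁₂`, `P₂₂`, `P₁₁` give a nonnegative
solution of the `n`-th decoupled algebraic Riccati equations for Dirichlet
boundary LQR control of the damped wave equation. -/
theorem dirichlet_modal_riccati_solution
    (n : ℕ) (hn : 1 ≤ n) (α γ Q11 Q12 Q22 : ℝ)
    (hα : 0 ≤ α) (hγ : 0 < γ) (hQ11 : 0 ≤ Q11) (hQ22 : 0 ≤ Q22)
    (P12 P22 P11 : ℝ)
    (hP12 : P12 = (-1 + Real.sqrt (1 + γ ^ 2 * Q11 / ((n : ℝ) ^ 2 * Real.pi ^ 2))) / γ ^ 2)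
    (hP22 : P22 = (-α + Real.sqrt (α ^ 2 + (n : ℝ) ^ 2 * Real.pi ^ 2 * γ ^ 2 * (Q22 + 2 * P12))) /
        ((n : ℝ) ^ 2 * Real.pi ^ 2 * γ ^ 2))
    (hP11 : P11 = α * P12 + (n : ℝ) ^ 2 * Real.pi ^ 2 * (1 + γ ^ 2 * P12) * P22 - Q12) :
    0 ≤ P12 ∧ 0 ≤ P22 ∧
    0 = -2 * (n : ℝ) ^ 2 * Real.pi ^ 2 * P12 + Q11 - (n : ℝ) ^ 2 * Real.pi ^ 2 * γ ^ 2 * P12 ^ 2 ∧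
    0 = P11 - α * P12 - (n : ℝ) ^ 2 * Real.pi ^ 2 * P22 + Q12
        - (n : ℝ) ^ 2 * Real.pi ^ 2 * γ ^ 2 * P12 * P22 ∧
    0 = 2 * P12 - 2 * α * P22 + Q22 - (n : ℝ) ^ 2 * Real.pi ^ 2 * γ ^ 2 * P22 ^ 2 := by
  have hn0 : (0 : ℝ) < (n : ℝ) := by exact_mod_cast hn
  have hk : 0 < (n : ℝ) ^ 2 * Real.pi ^ 2 := by positivity
  have hg : 0 < γ ^ 2 := by positivity
  have hD : 0 < (n : ℝ) ^ 2 * Real.pi ^ 2 * γ ^ 2 := by positivity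
  have hx : 0 ≤ γ ^ 2 * Q11 / ((n : ℝ) ^ 2 * Real.pi ^ 2) := by positivity
  have h12 : 0 ≤ P12 := by
    rw [hP12]
    apply div_nonneg _ hg.le
    have : 1 ≤ Real.sqrt (1 + γ ^ 2 * Q11 / ((n : ℝ) ^ 2 * Real.pi ^ 2)) :=
      Real.one_le_sqrt.mpr (by linarith)
    linarith
  have hy : 0 ≤ (n : ℝ) ^ 2 * Real.pi ^ 2 * γ ^ 2 * (Q22 + 2 * P12) := by positivity
  have h22 : 0 ≤ P22 := by
    rw [hP22]
    apply div_nonneg _ hD.le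
    have := Real.le_sqrt_of_sq_le (le_add_of_nonneg_right (a := α ^ 2) hy)
    linarith
  have hs := Real.sq_sqrt (add_nonneg zero_le_one hx)
  have ht := Real.sq_sqrt (add_nonneg (sq_nonneg α) hy)
  rw [eq_div_iff hg.ne'] at hP12
  rw [eq_div_iff hD.ne'] at hP22
  rw [show Real.sqrt (1 + γ ^ 2 * Q11 / ((n : ℝ) ^ 2 * Real.pi ^ 2)) = P12 * γ ^ 2 + 1 by
    linarith] at hs
  rw [show Real.sqrt (α ^ 2 + (n : ℝ) ^ 2 * Real.pi ^ 2 * γ ^ 2 * (Q22 + 2 * P12))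
    = P22 * ((n : ℝ) ^ 2 * Real.pi ^ 2 * γ ^ 2) + α by linarith] at ht
  have hq : γ ^ 2 * Q11 / ((n : ℝ) ^ 2 * Real.pi ^ 2) * ((n : ℝ) ^ 2 * Real.pi ^ 2)
    = γ ^ 2 * Q11 := div_mul_cancel₀ _ hk.ne'
  refine ⟨h12, h22, ?_, ?_, ?_⟩
  · apply mul_left_cancel₀ hg.ne'
    linear_combination ((n : ℝ) ^ 2 * Real.pi ^ 2) * hs + hq
  · rw [hP11]; ring
  · apply mul_left_cancel₀ hD.ne'
    linear_combination ht
end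

section
/- Fix an integer n ≥ 1 and real numbers α ≥ 0, γ ∈ ℝ, and P₁₁, P₁₂, P₂₂, Q₁₁, Q₁₂, Q₂₂ satisfying the n-th Dirichlet algebraic Riccati equations: 0 = −2n²π²P₁₂ + Q₁₁ − n²π²γ²P₁₂², 0 = P₁₁ − αP₁₂ − n²π²P₂₂ + Q₁₂ − n²π²γ²P₁₂P₂₂, and 0 = 2P₁₂ − 2αP₂₂ + Q₂₂ − n²π²γ²P₂₂². Define the matrix-valued kernels P(x₁,x₂) = [[P₁₁,P₁₂],[P₁₂,P₂₂]] sin(nπx₁) sin(nπx₂) and Q(x₁,x₂) = [[Q₁₁,Q₁₂],[Q₁₂,Q₂₂]] sin(nπx₁) sin(nπx₂) on [0,1]². Then P vanishes whenever x₁ ∈ {0,1} or x₂ ∈ {0,1}, and for all (x₁,x₂) ∈ [0,1]² the Riccati partial differential equations hold: (i) ∂²P₂₁/∂x₁² + ∂²P₁₂/∂x₂² + Q₁₁ = γ² (∂P₁₂/∂x₂)(x₁,0) · (∂P₂₁/∂x₁)(0,x₂); (ii) P₁₁ − αP₁₂ + ∂²P₂₂/∂x₁² + Q₁₂ = γ²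 (∂P₁₂/∂x₂)(x₁,0) · (∂P₂₂/∂x₁)(0,x₂); (iii) P₁₁ − αP₂₁ + ∂²P₂₂/∂x₂² + Q₂₁ = γ² (∂P₂₂/∂x₂)(x₁,0) · (∂P₂₁/∂x₁)(0,x₂); (iv) P₁₂ + P₂₁ − 2αP₂₂ + Q₂₂ = γ² (∂P₂₂/∂x₂)(x₁,0) · (∂P₂₂/∂x₁)(0,x₂), where all kernel entries are evaluated at (x₁,x₂) unless indicated otherwise and P₂₁ = P₁₂, Q₂₁ = Q₁₂. -/
/-- The single-mode Dirichlet kernel `c · sin(nπx₁) · sin(nπx₂)`. -/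
noncomputable def sinKer (c : ℝ) (n : ℕ) (x₁ x₂ : ℝ) : ℝ :=
  c * Real.sin ((n : ℝ) * Real.pi * x₁) * Real.sin ((n : ℝ) * Real.pi * x₂)

lemma sinKer_deriv_aux (a b k : ℝ) :
    deriv (fun y => a * Real.sin (k * y) * b) = fun y => a * k * b * Real.cos (k * y) := by
  funext y
  have h : HasDerivAt (fun y : ℝ => k * y) k y := by
    simpa using (hasDerivAt_id y).const_mul k
  rw [((h.sin.const_mul a).mul_const b).deriv]
  ring

lemma sinKer_deriv_aux2 (a k : ℝ) :
    deriv (fun y => a * Real.cos (k * y)) = fun y => -(a * k) * Real.sin (k * y) := by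
  funext y
  have h : HasDerivAt (fun y : ℝ => k * y) k y := by
    simpa using (hasDerivAt_id y).const_mul k
  rw [(h.cos.const_mul a).deriv]
  ring

lemma sinKer_deriv_left (c : ℝ) (n : ℕ) (x₂ : ℝ) :
    deriv (fun y => sinKer c n y x₂) = fun y =>
      c * (n * Real.pi) * Real.sin (n * Real.pi * x₂) * Real.cos (n * Real.pi * y) :=
  sinKer_deriv_aux _ _ _

lemma sinKer_deriv_right (c : ℝ) (n : ℕ) (x₁ : ℝ) :
    deriv (fun y => sinKer c n x₁ y) = fun y =>
      c * (n * Real.pi) * Real.sin (n * Real.pi * x₁) * Real.cos (n * Real.pi * y) := by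
  rw [← sinKer_deriv_left]
  congr 1
  funext y
  simp only [sinKer]
  ring

/-- If `(P₁₁, P₁₂, P₂₂)` solves the `n`-th Dirichlet algebraic
Riccati equations, then the single-mode kernel
`P(x₁,x₂) = [[P₁₁,P₁₂],[P₁₂,P₂₂]] sin(nπx₁) sin(nπx₂)` satisfies the Dirichlet
boundary conditions and the four Riccati partial differential equations with
weight kernel `Q(x₁,x₂) = [[Q₁₁,Q₁₂],[Q₁₂,Q₂₂]] sin(nπx₁) sin(nπx₂)`. -/
theorem dirichlet_riccati_pde_single_mode
    (n : ℕ) (hn : 1 ≤ n) (α γ P11 P12 P22 Q11 Q12 Q22 : ℝ) (hα : 0 ≤ α)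
    (h1 : 0 = -2 * (n : ℝ) ^ 2 * Real.pi ^ 2 * P12 + Q11
        - (n : ℝ) ^ 2 * Real.pi ^ 2 * γ ^ 2 * P12 ^ 2)
    (h2 : 0 = P11 - α * P12 - (n : ℝ) ^ 2 * Real.pi ^ 2 * P22 + Q12
        - (n : ℝ) ^ 2 * Real.pi ^ 2 * γ ^ 2 * P12 * P22)
    (h3 : 0 = 2 * P12 - 2 * α * P22 + Q22 - (n : ℝ) ^ 2 * Real.pi ^ 2 * γ ^ 2 * P22 ^ 2) :
    -- Dirichlet boundary conditions on the kernel P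
    (∀ x₁ x₂ : ℝ, (x₁ = 0 ∨ x₁ = 1 ∨ x₂ = 0 ∨ x₂ = 1) →
      sinKer P11 n x₁ x₂ = 0 ∧ sinKer P12 n x₁ x₂ = 0 ∧ sinKer P22 n x₁ x₂ = 0) ∧
    -- the four Riccati PDEs
    (∀ x₁ ∈ Set.Icc (0 : ℝ) 1, ∀ x₂ ∈ Set.Icc (0 : ℝ) 1,
      -- (i)
      (deriv (deriv (fun y => sinKer P12 n y x₂)) x₁ +
          deriv (deriv (fun y => sinKer P12 n x₁ y)) x₂ + sinKer Q11 n x₁ x₂ =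
        γ ^ 2 * deriv (fun y => sinKer P12 n x₁ y) 0 *
          deriv (fun y => sinKer P12 n y x₂) 0) ∧
      -- (ii)
      (sinKer P11 n x₁ x₂ - α * sinKer P12 n x₁ x₂ +
          deriv (deriv (fun y => sinKer P22 n y x₂)) x₁ + sinKer Q12 n x₁ x₂ =
        γ ^ 2 * deriv (fun y => sinKer P12 n x₁ y) 0 *
          deriv (fun y => sinKer P22 n y x₂) 0) ∧
      -- (iii)
      (sinKer P11 n x₁ x₂ - α * sinKer P12 n x₁ x₂ +
          deriv (deriv (fun y => sinKer P22 n x₁ y)) x₂ + sinKer Q12 n x₁ x₂ =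
        γ ^ 2 * deriv (fun y => sinKer P22 n x₁ y) 0 *
          deriv (fun y => sinKer P12 n y x₂) 0) ∧
      -- (iv)
      (sinKer P12 n x₁ x₂ + sinKer P12 n x₁ x₂ - 2 * α * sinKer P22 n x₁ x₂ +
          sinKer Q22 n x₁ x₂ =
        γ ^ 2 * deriv (fun y => sinKer P22 n x₁ y) 0 *
          deriv (fun y => sinKer P22 n y x₂) 0)) := by
  refine ⟨?_, ?_⟩
  · intro x₁ x₂ h
    rcases h with rfl | rfl | rfl | rfl <;> simp [sinKer, Real.sin_nat_mul_pi]
  · intro x₁ _ x₂ _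
    simp only [sinKer_deriv_left, sinKer_deriv_right, sinKer_deriv_aux2, mul_zero, Real.cos_zero,
      mul_one]
    simp only [sinKer]
    generalize Real.sin (n * Real.pi * x₁) = s
    generalize Real.sin (n * Real.pi * x₂) = t
    refine ⟨?_, ?_, ?_, ?_⟩
    · linear_combination (-(s * t)) * h1
    · linear_combination (-(s * t)) * h2
    · linear_combination (-(s * t)) * h2
    · linear_combination (-(s * t)) * h3
end

section
/- Fix real numbers q > 0 and r > 1. With P₁₂(n) = √(1 + q/(π²n^{2+r})) − 1, P₂₂(n) = √((q/nʳ + 2P₁₂(n))/(n²π²)) and P₁₁(n) = n²π²(1 + P₁₂(n))P₂₂(n), there exists a constant c₂ > 0 (one may take c₂ = π√(2q)(1 + q/(2π²))) such that 0 < P₁₁(n) ≤ c₂ · n^{1−r/2} for every integer n ≥ 1. -/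
/-- `P₁₂(n)` in the Dirichlet boundary control example. -/
noncomputable def dirP12 (q r : ℝ) (n : ℕ) : ℝ :=
  Real.sqrt (1 + q / (Real.pi ^ 2 * (n : ℝ) ^ ((2 : ℝ) + r))) - 1

/-- `P₂₂(n)` in the Dirichlet boundary control example. -/
noncomputable def dirP22 (q r : ℝ) (n : ℕ) : ℝ :=
  Real.sqrt ((q / (n : ℝ) ^ r + 2 * dirP12 q r n) / ((n : ℝ) ^ 2 * Real.pi ^ 2))

/-- `P₁₁(n)` in the Dirichlet boundary control example. -/
noncomputable def dirP11 (q r : ℝ) (n : ℕ) : ℝ :=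
  (n : ℝ) ^ 2 * Real.pi ^ 2 * (1 + dirP12 q r n) * dirP22 q r n

/-- In the Dirichlet example there is a constant `c₂ > 0`
(one may take `c₂ = π√(2q)(1 + q/(2π²))`) such that
`0 < P₁₁(n) ≤ c₂ · n^{1−r/2}` for every `n ≥ 1`. -/
theorem dirichlet_example_P11_bound (q r : ℝ) (hq : 0 < q) (hr : 1 < r) :
    ∃ c₂ : ℝ, 0 < c₂ ∧ c₂ = Real.pi * Real.sqrt (2 * q) * (1 + q / (2 * Real.pi ^ 2)) ∧
      ∀ n : ℕ, 1 ≤ n →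
        0 < dirP11 q r n ∧ dirP11 q r n ≤ c₂ * (n : ℝ) ^ ((1 : ℝ) - r / 2) := by
  have hpi := Real.pi_gt_three
  have hpi0 := Real.pi_pos
  refine ⟨_, by positivity, rfl, ?_⟩
  intro n hn
  have hx : (1 : ℝ) ≤ n := by exact_mod_cast hn
  have hx0 : (0 : ℝ) < n := by linarith
  obtain ⟨B, hB⟩ : ∃ B : ℝ, B = (n : ℝ) ^ (r / 2) := ⟨_, rfl⟩
  have hB1 : 1 ≤ B := by
    rw [hB]; exact Real.one_le_rpow hx (by linarith)
  have hB0 : 0 < B := by linarith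
  have hA : (n : ℝ) ^ r = B ^ 2 := by
    rw [hB, sq, ← Real.rpow_add hx0]; congr 1; ring
  have hA2 : (n : ℝ) ^ ((2 : ℝ) + r) = (n : ℝ) ^ 2 * B ^ 2 := by
    rw [Real.rpow_add hx0, hA, Real.rpow_two]
  have hC : (n : ℝ) ^ ((1 : ℝ) - r / 2) = n / B := by
    rw [Real.rpow_sub hx0, Real.rpow_one, hB]
  obtain ⟨p, hp⟩ : ∃ p : ℝ, p = dirP12 q r n := ⟨_, rfl⟩
  have hu0 : 0 < q / (Real.pi ^ 2 * ((n : ℝ) ^ 2 * B ^ 2)) := by positivity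
  have hp0 : 0 ≤ p := by
    rw [hp, dirP12, hA2, sub_nonneg]
    exact Real.one_le_sqrt.mpr (by linarith)
  have hpu : 2 * p ≤ q / (Real.pi ^ 2 * ((n : ℝ) ^ 2 * B ^ 2)) := by
    have h := Real.sqrt_one_add_le (x := q / (Real.pi ^ 2 * ((n : ℝ) ^ 2 * B ^ 2))) (by linarith)
    rw [hp, dirP12, hA2]
    linarith
  have hn2 : (1 : ℝ) ≤ (n : ℝ) ^ 2 := one_le_pow₀ hx
  have hB2 : (1 : ℝ) ≤ B ^ 2 := one_le_pow₀ hB1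
  have hp1 : 1 + p ≤ 1 + q / (2 * Real.pi ^ 2) := by
    have h1 : q / (Real.pi ^ 2 * ((n : ℝ) ^ 2 * B ^ 2)) ≤ q / Real.pi ^ 2 := by
      apply div_le_div_of_nonneg_left hq.le (by positivity)
      exact le_mul_of_one_le_right (by positivity) (one_le_mul_of_one_le_of_one_le hn2 hB2)
    have h2 : q / (2 * Real.pi ^ 2) = (q / Real.pi ^ 2) / 2 := by field_simp
    linarith
  have hp2 : 2 * p ≤ q / B ^ 2 := by
    refine hpu.trans ?_
    apply div_le_div_of_nonneg_left hq.le (by positivity)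
    have h1 : (1 : ℝ) ≤ Real.pi ^ 2 := one_le_pow₀ (by linarith)
    rw [← mul_assoc]
    exact le_mul_of_one_le_left (by positivity) (one_le_mul_of_one_le_of_one_le h1 hn2)
  have hq2 : 0 < q / B ^ 2 := by positivity
  have hs0 : 0 < dirP22 q r n := by
    rw [dirP22, hA, ← hp]
    apply Real.sqrt_pos.mpr
    positivity
  have hs : dirP22 q r n ≤ Real.sqrt (2 * q) / (B * (n * Real.pi)) := by
    rw [dirP22, hA, ← hp]
    apply Real.sqrt_le_iff.mpr
    refine ⟨by positivity, ?_⟩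
    rw [div_pow, Real.sq_sqrt (by positivity)]
    have h3 : 2 * q / (B * (n * Real.pi)) ^ 2
        = (q / B ^ 2 + q / B ^ 2) / ((n : ℝ) ^ 2 * Real.pi ^ 2) := by
      field_simp; ring
    rw [h3]
    gcongr
  rw [dirP11, hC, ← hp]
  refine ⟨by positivity, ?_⟩
  calc (n : ℝ) ^ 2 * Real.pi ^ 2 * (1 + p) * dirP22 q r n
      ≤ (n : ℝ) ^ 2 * Real.pi ^ 2 * (1 + q / (2 * Real.pi ^ 2)) *
        (Real.sqrt (2 * q) / (B * (n * Real.pi))) := by gcongr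
    _ = _ := by field_simp
end

section
/- Fix real numbers q > 0 and r > 2. With P₁₂(n) = √(1 + q/(π²n^{2+r})) − 1 and P₂₂(n) = √((q/nʳ + 2P₁₂(n))/(n²π²)), both series Σ_{n=1}^∞ nπ P₁₂(n) and Σ_{n=1}^∞ nπ P₂₂(n) converge; consequently, for every x ∈ [0,1] the series defining the optimal feedback gain, K(x) = −Σ_{n=1}^∞ nπ (P₁₂(n), P₂₂(n)) sin(nπx), converges absolutely. -/
theorem dirP12_bounds (q r : ℝ) (hq : 0 < q) (n : ℕ) :
    0 ≤ dirP12 q r (n + 1) ∧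
    dirP12 q r (n + 1) ≤ q / (Real.pi ^ 2 * (((n : ℝ) + 1) ^ 2 * ((n : ℝ) + 1) ^ r)) := by
  have hm : (0 : ℝ) < (n : ℝ) + 1 := by positivity
  have hpi := Real.pi_pos
  have e : ((n + 1 : ℕ) : ℝ) ^ ((2 : ℝ) + r) = ((n : ℝ) + 1) ^ 2 * ((n : ℝ) + 1) ^ r := by
    push_cast
    rw [Real.rpow_add hm, Real.rpow_two]
  unfold dirP12
  rw [e]
  have ht : 0 < q / (Real.pi ^ 2 * (((n : ℝ) + 1) ^ 2 * ((n : ℝ) + 1) ^ r)) := by positivity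
  generalize q / (Real.pi ^ 2 * (((n : ℝ) + 1) ^ 2 * ((n : ℝ) + 1) ^ r)) = t at ht
  constructor
  · have : 1 ≤ Real.sqrt (1 + t) := Real.one_le_sqrt.mpr (by linarith)
    linarith
  · have : Real.sqrt (1 + t) ≤ 1 + t := by
      rw [Real.sqrt_le_left (by linarith)]
      nlinarith
    linarith

theorem summable_shift_rpow (p : ℝ) (hp : 1 < p) :
    Summable (fun n : ℕ => 1 / ((n : ℝ) + 1) ^ p) := by
  have h := (summable_nat_add_iff 1).mpr (Real.summable_one_div_nat_rpow.mpr hp)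
  simpa using h

/-- In the Dirichlet example with `r > 2`, both series
`Σ_{n≥1} nπ P₁₂(n)` and `Σ_{n≥1} nπ P₂₂(n)` converge; consequently for every
`x ∈ [0,1]` the series defining the optimal feedback gain
`K(x) = −Σ_{n≥1} nπ (P₁₂(n), P₂₂(n)) sin(nπx)` converges absolutely. -/
theorem dirichlet_example_feedback_converges (q r : ℝ) (hq : 0 < q) (hr : 2 < r) :
    Summable (fun n : ℕ => ((n : ℝ) + 1) * Real.pi * dirP12 q r (n + 1)) ∧
    Summable (fun n : ℕ => ((n : ℝ) + 1) * Real.pi * dirP22 q r (n + 1)) ∧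
    ∀ x ∈ Set.Icc (0 : ℝ) 1,
      Summable (fun n : ℕ =>
        |((n : ℝ) + 1) * Real.pi * dirP12 q r (n + 1) *
          Real.sin (((n : ℝ) + 1) * Real.pi * x)|) ∧
      Summable (fun n : ℕ =>
        |((n : ℝ) + 1) * Real.pi * dirP22 q r (n + 1) *
          Real.sin (((n : ℝ) + 1) * Real.pi * x)|) := by
  have hpi := Real.pi_gt_three
  have h1 : Summable (fun n : ℕ => ((n : ℝ) + 1) * Real.pi * dirP12 q r (n + 1)) := by
    refine Summable.of_nonneg_of_le (fun n => ?_) (fun n => ?_)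
      ((summable_shift_rpow r (by linarith)).mul_left q)
    · have := (dirP12_bounds q r hq n).1
      positivity
    · have hm : (1 : ℝ) ≤ (n : ℝ) + 1 := by simp
      have ha : (0 : ℝ) < ((n : ℝ) + 1) ^ r := by positivity
      calc _ ≤ ((n : ℝ) + 1) * Real.pi *
            (q / (Real.pi ^ 2 * (((n : ℝ) + 1) ^ 2 * ((n : ℝ) + 1) ^ r))) := by
            gcongr
            exact (dirP12_bounds q r hq n).2
        _ = (q * (1 / ((n : ℝ) + 1) ^ r)) / (((n : ℝ) + 1) * Real.pi) := by
            field_simp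
        _ ≤ _ := div_le_self (by positivity) (by nlinarith)
  have h2 : Summable (fun n : ℕ => ((n : ℝ) + 1) * Real.pi * dirP22 q r (n + 1)) := by
    refine Summable.of_nonneg_of_le (fun n => ?_) (fun n => ?_)
      ((summable_shift_rpow (r / 2) (by linarith)).mul_left (Real.sqrt (3 * q)))
    · unfold dirP22
      positivity
    · have hm : (1 : ℝ) ≤ (n : ℝ) + 1 := by simp
      have ha : (0 : ℝ) < ((n : ℝ) + 1) ^ r := by positivity
      have hb : dirP12 q r (n + 1) ≤ q / ((n : ℝ) + 1) ^ r := by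
        refine (dirP12_bounds q r hq n).2.trans ?_
        have h3 : 1 ≤ Real.pi ^ 2 * ((n : ℝ) + 1) ^ 2 :=
          one_le_mul_of_one_le_of_one_le (by nlinarith) (by nlinarith)
        gcongr
        nlinarith
      have e : ((n : ℝ) + 1) ^ r = (((n : ℝ) + 1) ^ (r / 2)) ^ 2 := by
        rw [← Real.rpow_natCast, ← Real.rpow_mul (by positivity)]
        norm_num
      have hc : (0 : ℝ) < ((n : ℝ) + 1) ^ (r / 2) := by positivity
      unfold dirP22
      push_cast
      rw [Real.sqrt_div' _ (by positivity), ← mul_pow, Real.sqrt_sq (by positivity),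
        mul_div_cancel₀ _ (by positivity)]
      calc _ ≤ Real.sqrt (3 * q / (((n : ℝ) + 1) ^ (r / 2)) ^ 2) := by
            apply Real.sqrt_le_sqrt
            rw [← e]
            have : 3 * q / ((n : ℝ) + 1) ^ r = 3 * (q / ((n : ℝ) + 1) ^ r) := by ring
            linarith
        _ = _ := by
            rw [Real.sqrt_div' _ (by positivity), Real.sqrt_sq hc.le]
            ring
  have key : ∀ (f g : ℕ → ℝ), Summable f → (∀ n, |g n| ≤ 1) →
      Summable (fun n => |f n * g n|) := by
    intro f g hf hg
    refine Summable.of_nonneg_of_le (fun n => abs_nonneg _) (fun n => ?_) hf.abs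
    rw [abs_mul]
    exact mul_le_of_le_one_right (abs_nonneg _) (hg n)
  exact ⟨h1, h2, fun x _ => ⟨key _ _ h1 fun n => Real.abs_sin_le_one _,
    key _ _ h2 fun n => Real.abs_sin_le_one _⟩⟩
end

section
/- Fix real numbers q > 0 and r > 0, and set P₁₂(n) = √(1 + q/(π²n^{2+r})) − 1 and P₂₂(n) = √((q/nʳ + 2P₁₂(n))/(n²π²)). Then there exists an integer N such that for all n ≥ N the discriminant of the n-th closed-loop characteristic polynomial is negative: (n²π²P₂₂(n))² < 4(n²π² + P₁₂(n)). Consequently, for all n ≥ N the two closed-loop eigenvalues μₙ, μ₋ₙ of the n-th mode are a non-real complex-conjugate pair with real part −n²π²P₂₂(n)/2 < 0. -/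
/-- In the Dirichlet example, for all large enough `n` the
discriminant of the closed-loop characteristic polynomial
`μ² + n²π²P₂₂(n) μ + (n²π² + P₁₂(n))` is negative, so its two roots form a
non-real complex-conjugate pair with (negative) real part `−n²π²P₂₂(n)/2`. -/
theorem dirichlet_example_high_modes_complex (q r : ℝ) (hq : 0 < q) (hr : 0 < r) :
    ∃ N : ℕ, 1 ≤ N ∧ ∀ n : ℕ, N ≤ n →
      ((n : ℝ) ^ 2 * Real.pi ^ 2 * dirP22 q r n) ^ 2 <
        4 * ((n : ℝ) ^ 2 * Real.pi ^ 2 + dirP12 q r n) ∧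
      ∀ μ : ℂ,
        μ ^ 2 + (((n : ℝ) ^ 2 * Real.pi ^ 2 * dirP22 q r n : ℝ) : ℂ) * μ +
            (((n : ℝ) ^ 2 * Real.pi ^ 2 + dirP12 q r n : ℝ) : ℂ) = 0 →
          μ.re = -((n : ℝ) ^ 2 * Real.pi ^ 2 * dirP22 q r n) / 2 ∧
          μ.re < 0 ∧ μ.im ≠ 0 ∧
          (starRingEnd ℂ μ) ^ 2 +
              (((n : ℝ) ^ 2 * Real.pi ^ 2 * dirP22 q r n : ℝ) : ℂ) * (starRingEnd ℂ μ) +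
              (((n : ℝ) ^ 2 * Real.pi ^ 2 + dirP12 q r n : ℝ) : ℂ) = 0 := by
  have hlim : Filter.Tendsto (fun n : ℕ => ((n : ℝ)) ^ r) Filter.atTop Filter.atTop :=
    (tendsto_rpow_atTop hr).comp tendsto_natCast_atTop_atTop
  obtain ⟨N, hN⟩ := Filter.eventually_atTop.1 (hlim.eventually_gt_atTop (q / 2))
  refine ⟨max N 1, le_max_right _ _, fun n hn => ?_⟩
  have hnN := hN n ((le_max_left _ _).trans hn)
  have hn1 : (1 : ℝ) ≤ n := by exact_mod_cast (le_max_right _ _).trans hn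
  have hn0 : (0 : ℝ) < n := by linarith
  have hpi := Real.pi_gt_three
  have hrp : (0 : ℝ) < (n : ℝ) ^ r := Real.rpow_pos_of_pos hn0 r
  have hy : q / (n : ℝ) ^ r < 2 := by
    rw [div_lt_iff₀ hrp]; linarith
  have hy0 : 0 < q / (n : ℝ) ^ r := by positivity
  have hx0 : 0 < q / (Real.pi ^ 2 * (n : ℝ) ^ ((2 : ℝ) + r)) := by positivity
  have hxy : q / (Real.pi ^ 2 * (n : ℝ) ^ ((2 : ℝ) + r)) ≤ q / (n : ℝ) ^ r := by
    apply div_le_div_of_nonneg_left hq.le hrp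
    have h1 : (n : ℝ) ^ r ≤ (n : ℝ) ^ ((2 : ℝ) + r) :=
      Real.rpow_le_rpow_of_exponent_le hn1 (by linarith)
    have h2 : 1 ≤ Real.pi ^ 2 := by nlinarith
    exact h1.trans (le_mul_of_one_le_left (hrp.le.trans h1) h2)
  have hP0 : 0 < dirP12 q r n := by
    unfold dirP12
    have : 1 < Real.sqrt (1 + q / (Real.pi ^ 2 * (n : ℝ) ^ ((2 : ℝ) + r))) := by
      rw [Real.lt_sqrt (by norm_num)]; linarith
    linarith
  have hP1 : dirP12 q r n < 1 := by
    unfold dirP12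
    have : Real.sqrt (1 + q / (Real.pi ^ 2 * (n : ℝ) ^ ((2 : ℝ) + r))) < 2 := by
      rw [Real.sqrt_lt' (by norm_num)]; linarith
    linarith
  have hA : 0 < (n : ℝ) ^ 2 * Real.pi ^ 2 := by positivity
  have hB : 0 < dirP22 q r n := by
    unfold dirP22
    apply Real.sqrt_pos.2
    positivity
  have hB2 : (n : ℝ) ^ 2 * Real.pi ^ 2 * dirP22 q r n ^ 2 =
      q / (n : ℝ) ^ r + 2 * dirP12 q r n := by
    unfold dirP22
    rw [Real.sq_sqrt (by positivity)]
    exact mul_div_cancel₀ _ hA.ne'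
  have hdisc : ((n : ℝ) ^ 2 * Real.pi ^ 2 * dirP22 q r n) ^ 2 <
        4 * ((n : ℝ) ^ 2 * Real.pi ^ 2 + dirP12 q r n) := by
    have : ((n : ℝ) ^ 2 * Real.pi ^ 2 * dirP22 q r n) ^ 2 =
        ((n : ℝ) ^ 2 * Real.pi ^ 2) * (q / (n : ℝ) ^ r + 2 * dirP12 q r n) := by
      rw [← hB2]; ring
    rw [this]
    nlinarith
  refine ⟨hdisc, ?_⟩
  have hb : 0 < (n : ℝ) ^ 2 * Real.pi ^ 2 * dirP22 q r n := mul_pos hA hB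
  generalize (n : ℝ) ^ 2 * Real.pi ^ 2 * dirP22 q r n = b at hdisc hb ⊢
  generalize (n : ℝ) ^ 2 * Real.pi ^ 2 + dirP12 q r n = c at hdisc ⊢
  intro μ hμ
  have hre := congrArg Complex.re hμ
  have him := congrArg Complex.im hμ
  simp [pow_two] at hre him
  have hi : μ.im ≠ 0 := by
    intro h0
    rw [h0] at hre
    nlinarith [sq_nonneg (2 * μ.re + b)]
  have hr' : μ.re = -b / 2 := by
    have : μ.im * (2 * μ.re + b) = 0 := by linarith
    rcases mul_eq_zero.1 this with h | h
    · exact absurd h hi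
    · linarith
  refine ⟨hr', by linarith, hi, ?_⟩
  have := congrArg (starRingEnd ℂ) hμ
  simpa using this
end

section
/- Fix an integer n ≥ 0 and real numbers α ≥ 0, γ > 0, Q₁₁ ≥ 0, Q₂₂ ≥ 0, and Q₁₂ ∈ ℝ. Define P₁₂ = (−n²π² + √(n⁴π⁴ + γ²Q₁₁))/γ², P₂₂ = (−α + √(α² + γ²(Q₂₂ + 2P₁₂)))/γ², and P₁₁ = αP₁₂ + (n²π² + γ²P₁₂)P₂₂ − Q₁₂. Then P₁₂ ≥ 0, P₂₂ ≥ 0, and these values satisfy the coupled algebraic Riccati equations: 0 = −2n²π²P₁₂ + Q₁₁ − γ²P₁₂², 0 = P₁₁ − αP₁₂ − n²π²P₂₂ + Q₁₂ − γ²P₁₂P₂₂, and 0 = 2P₁₂ − 2αP₂₂ + Q₂₂ − γ²P₂₂². -/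
theorem riccati_scalar_aux (a g q p : ℝ) (ha : 0 ≤ a) (hg : 0 < g) (hq : 0 ≤ q)
    (hp : p = (-a + Real.sqrt (a ^ 2 + g ^ 2 * q)) / g ^ 2) :
    0 ≤ p ∧ 0 = -2 * a * p + q - g ^ 2 * p ^ 2 := by
  have hg2 : 0 < g ^ 2 := by positivity
  have hs : Real.sqrt (a ^ 2 + g ^ 2 * q) ^ 2 = a ^ 2 + g ^ 2 * q :=
    Real.sq_sqrt (by positivity)
  have hle : a ≤ Real.sqrt (a ^ 2 + g ^ 2 * q) :=
    Real.le_sqrt_of_sq_le (by nlinarith [mul_nonneg hg2.le hq])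
  have he : g ^ 2 * p = -a + Real.sqrt (a ^ 2 + g ^ 2 * q) := by
    rw [hp]; field_simp
  refine ⟨by rw [hp]; exact div_nonneg (by linarith) hg2.le, ?_⟩
  have h2 : Real.sqrt (a ^ 2 + g ^ 2 * q) = g ^ 2 * p + a := by linarith
  rw [h2] at hs
  apply mul_left_cancel₀ hg2.ne'
  linear_combination hs

/-- The explicit formulas for `P₁₂`, `P₂₂`, `P₁₁` give a
nonnegative solution of the `n`-th decoupled algebraic Riccati equations for
Neumann boundary LQR control of the damped wave equation (here `n ≥ 0`). -/
theorem neumann_modal_riccati_solution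
    (n : ℕ) (α γ Q11 Q12 Q22 : ℝ)
    (hα : 0 ≤ α) (hγ : 0 < γ) (hQ11 : 0 ≤ Q11) (hQ22 : 0 ≤ Q22)
    (P12 P22 P11 : ℝ)
    (hP12 : P12 = (-((n : ℝ) ^ 2 * Real.pi ^ 2) +
        Real.sqrt ((n : ℝ) ^ 4 * Real.pi ^ 4 + γ ^ 2 * Q11)) / γ ^ 2)
    (hP22 : P22 = (-α + Real.sqrt (α ^ 2 + γ ^ 2 * (Q22 + 2 * P12))) / γ ^ 2)
    (hP11 : P11 = α * P12 + ((n : ℝ) ^ 2 * Real.pi ^ 2 + γ ^ 2 * P12) * P22 - Q12) :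
    0 ≤ P12 ∧ 0 ≤ P22 ∧
    0 = -2 * (n : ℝ) ^ 2 * Real.pi ^ 2 * P12 + Q11 - γ ^ 2 * P12 ^ 2 ∧
    0 = P11 - α * P12 - (n : ℝ) ^ 2 * Real.pi ^ 2 * P22 + Q12 - γ ^ 2 * P12 * P22 ∧
    0 = 2 * P12 - 2 * α * P22 + Q22 - γ ^ 2 * P22 ^ 2 := by
  obtain ⟨h1, h2⟩ := riccati_scalar_aux ((n : ℝ) ^ 2 * Real.pi ^ 2) γ Q11 P12
    (by positivity) hγ hQ11 (by rw [hP12]; ring_nf)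
  obtain ⟨h3, h4⟩ := riccati_scalar_aux α γ (Q22 + 2 * P12) P22 hα hγ (by linarith) hP22
  refine ⟨h1, h3, ?_, ?_, ?_⟩
  · linear_combination h2
  · rw [hP11]; ring
  · linear_combination h4
end

section
/- Fix an integer n ≥ 0 and real numbers α ≥ 0, γ ∈ ℝ, and P₁₁, P₁₂, P₂₂, Q₁₁, Q₁₂, Q₂₂ satisfying the n-th Neumann algebraic Riccati equations: 0 = −2n²π²P₁₂ + Q₁₁ − γ²P₁₂², 0 = P₁₁ − αP₁₂ − n²π²P₂₂ + Q₁₂ − γ²P₁₂P₂₂, and 0 = 2P₁₂ − 2αP₂₂ + Q₂₂ − γ²P₂₂². Define the matrix-valued kernels P(x₁,x₂) = [[P₁₁,P₁₂],[P₁₂,P₂₂]] cos(nπx₁) cos(nπx₂) and Q(x₁,x₂) = [[Q₁₁,Q₁₂],[Q₁₂,Q₂₂]] cos(nπx₁) cos(nπx₂) on [0,1]². Then ∂P/∂x₁ vanishes at x₁ ∈ {0,1}, ∂P/∂x₂ vanishes at x₂ ∈ {0,1}, and for all (x₁,x₂) ∈ [0,1]² the Neumann Riccati partial differential equations hold: (i)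 ∂²P₂₁/∂x₁² + ∂²P₁₂/∂x₂² + Q₁₁ = γ² P₁₂(x₁,1)·P₂₁(1,x₂); (ii) P₁₁ − αP₁₂ + ∂²P₂₂/∂x₁² + Q₁₂ = γ² P₁₂(x₁,1)·P₂₂(1,x₂); (iii) P₁₁ − αP₂₁ + ∂²P₂₂/∂x₂² + Q₂₁ = γ² P₂₂(x₁,1)·P₂₁(1,x₂); (iv) P₁₂ + P₂₁ − 2αP₂₂ + Q₂₂ = γ² P₂₂(x₁,1)·P₂₂(1,x₂), where all kernel entries are evaluated at (x₁,x₂) unless indicated otherwise and P₂₁ = P₁₂, Q₂₁ = Q₁₂. -/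
/-- The single-mode Neumann kernel `c · cos(nπx₁) · cos(nπx₂)`. -/
noncomputable def cosKer (c : ℝ) (n : ℕ) (x₁ x₂ : ℝ) : ℝ :=
  c * Real.cos ((n : ℝ) * Real.pi * x₁) * Real.cos ((n : ℝ) * Real.pi * x₂)

theorem cosKer_d1 (c : ℝ) (n : ℕ) (z : ℝ) : deriv (fun y => cosKer c n y z) =
    fun y => -(c * (n * Real.pi) * Real.sin (n * Real.pi * y) * Real.cos (n * Real.pi * z)) := by
  funext y
  have h : HasDerivAt (fun y : ℝ => (n : ℝ) * Real.pi * y) (n * Real.pi) y := by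
    simpa using (hasDerivAt_id y).const_mul ((n : ℝ) * Real.pi)
  have := ((h.cos.const_mul c).mul_const (Real.cos (n * Real.pi * z))).deriv
  unfold cosKer
  rw [this]; ring

theorem cosKer_d2 (c : ℝ) (n : ℕ) (z y : ℝ) : deriv (deriv (fun y => cosKer c n y z)) y =
    -((n : ℝ) ^ 2 * Real.pi ^ 2 * cosKer c n y z) := by
  rw [cosKer_d1]
  have h : HasDerivAt (fun y : ℝ => (n : ℝ) * Real.pi * y) (n * Real.pi) y := by
    simpa using (hasDerivAt_id y).const_mul ((n : ℝ) * Real.pi)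
  have := (((h.sin.const_mul (c * (n * Real.pi))).mul_const (Real.cos (n * Real.pi * z))).fun_neg).deriv
  unfold cosKer
  rw [this]; ring

theorem cosKer_symm (c : ℝ) (n : ℕ) (x y : ℝ) : cosKer c n x y = cosKer c n y x := by
  unfold cosKer; ring

/-- If `(P₁₁, P₁₂, P₂₂)` solves the `n`-th Neumann algebraic
Riccati equations, then the single-mode kernel
`P(x₁,x₂) = [[P₁₁,P₁₂],[P₁₂,P₂₂]] cos(nπx₁) cos(nπx₂)` satisfies the Neumann
boundary conditions and the four Neumann Riccati partial differential equations
with weight kernel `Q(x₁,x₂) = [[Q₁₁,Q₁₂],[Q₁₂,Q₂₂]] cos(nπx₁) cos(nπx₂)`. -/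
theorem neumann_riccati_pde_single_mode
    (n : ℕ) (α γ P11 P12 P22 Q11 Q12 Q22 : ℝ) (hα : 0 ≤ α)
    (h1 : 0 = -2 * (n : ℝ) ^ 2 * Real.pi ^ 2 * P12 + Q11 - γ ^ 2 * P12 ^ 2)
    (h2 : 0 = P11 - α * P12 - (n : ℝ) ^ 2 * Real.pi ^ 2 * P22 + Q12 - γ ^ 2 * P12 * P22)
    (h3 : 0 = 2 * P12 - 2 * α * P22 + Q22 - γ ^ 2 * P22 ^ 2) :
    -- Neumann boundary conditions on the kernel P: ∂P/∂x₁ vanishes at x₁ ∈ {0,1},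
    -- ∂P/∂x₂ vanishes at x₂ ∈ {0,1}, entrywise
    (∀ c ∈ ({P11, P12, P22} : Set ℝ), ∀ x₁ x₂ : ℝ,
      ((x₁ = 0 ∨ x₁ = 1) → deriv (fun y => cosKer c n y x₂) x₁ = 0) ∧
      ((x₂ = 0 ∨ x₂ = 1) → deriv (fun y => cosKer c n x₁ y) x₂ = 0)) ∧
    -- the four Neumann Riccati PDEs
    (∀ x₁ ∈ Set.Icc (0 : ℝ) 1, ∀ x₂ ∈ Set.Icc (0 : ℝ) 1,
      -- (i)
      (deriv (deriv (fun y => cosKer P12 n y x₂)) x₁ +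
          deriv (deriv (fun y => cosKer P12 n x₁ y)) x₂ + cosKer Q11 n x₁ x₂ =
        γ ^ 2 * cosKer P12 n x₁ 1 * cosKer P12 n 1 x₂) ∧
      -- (ii)
      (cosKer P11 n x₁ x₂ - α * cosKer P12 n x₁ x₂ +
          deriv (deriv (fun y => cosKer P22 n y x₂)) x₁ + cosKer Q12 n x₁ x₂ =
        γ ^ 2 * cosKer P12 n x₁ 1 * cosKer P22 n 1 x₂) ∧
      -- (iii)
      (cosKer P11 n x₁ x₂ - α * cosKer P12 n x₁ x₂ +
          deriv (deriv (fun y => cosKer P22 n x₁ y)) x₂ + cosKer Q12 n x₁ x₂ =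
        γ ^ 2 * cosKer P22 n x₁ 1 * cosKer P12 n 1 x₂) ∧
      -- (iv)
      (cosKer P12 n x₁ x₂ + cosKer P12 n x₁ x₂ - 2 * α * cosKer P22 n x₁ x₂ +
          cosKer Q22 n x₁ x₂ =
        γ ^ 2 * cosKer P22 n x₁ 1 * cosKer P22 n 1 x₂)) := by
  have hd : ∀ c x z : ℝ, (x = 0 ∨ x = 1) → deriv (fun y => cosKer c n y z) x = 0 := by
    rintro c x z (rfl | rfl) <;> rw [cosKer_d1] <;> simp [Real.sin_nat_mul_pi]
  have hs : ∀ c x : ℝ, (fun y => cosKer c n x y) = fun y => cosKer c n y x :=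
    fun c x => funext fun y => cosKer_symm c n x y
  have hc : Real.cos (n * Real.pi) ^ 2 = 1 := by
    have := Real.sin_sq_add_cos_sq (n * Real.pi)
    rw [Real.sin_nat_mul_pi] at this
    linarith
  have hp : ∀ a b x y : ℝ, γ ^ 2 * cosKer a n x 1 * cosKer b n 1 y =
      γ ^ 2 * a * b * (Real.cos (n * Real.pi * x) * Real.cos (n * Real.pi * y)) := by
    intro a b x y
    unfold cosKer
    rw [mul_one]
    linear_combination (γ ^ 2 * a * b * (Real.cos (n * Real.pi * x) * Real.cos (n * Real.pi * y))) * hc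
  refine ⟨fun c _ x₁ x₂ => ⟨hd c x₁ x₂, fun h => by rw [hs]; exact hd c x₂ x₁ h⟩, ?_⟩
  intro x₁ _ x₂ _
  have hd2 : ∀ c : ℝ, deriv (deriv (fun y => cosKer c n x₁ y)) x₂ =
      -((n : ℝ) ^ 2 * Real.pi ^ 2 * cosKer c n x₁ x₂) := by
    intro c
    rw [hs, cosKer_d2, cosKer_symm]
  rw [hd2, hd2, cosKer_d2, cosKer_d2, hp, hp, hp, hp]
  unfold cosKer
  refine ⟨?_, ?_, ?_, ?_⟩
  · linear_combination (-(Real.cos (n * Real.pi * x₁) * Real.cos (n * Real.pi * x₂))) * h1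
  · linear_combination (-(Real.cos (n * Real.pi * x₁) * Real.cos (n * Real.pi * x₂))) * h2
  · linear_combination (-(Real.cos (n * Real.pi * x₁) * Real.cos (n * Real.pi * x₂))) * h2
  · linear_combination (-(Real.cos (n * Real.pi * x₁) * Real.cos (n * Real.pi * x₂))) * h3
end

section
/- Fix real numbers q > 0 and r > 1 and an integer n ≥ 1. With P₁₂(n) = √(n⁴π⁴ + q/nʳ) − n²π² and P₂₂(n) = √(q/nʳ + 2P₁₂(n)), one has 0 < P₂₂(n) ≤ √(2q) · n^{−r/2}. -/
/-- `P₁₂(n)` in the Neumann boundary control example. -/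
noncomputable def neuP12 (q r : ℝ) (n : ℕ) : ℝ :=
  Real.sqrt ((n : ℝ) ^ 4 * Real.pi ^ 4 + q / (n : ℝ) ^ r) - (n : ℝ) ^ 2 * Real.pi ^ 2

/-- `P₂₂(n)` in the Neumann boundary control example. -/
noncomputable def neuP22 (q r : ℝ) (n : ℕ) : ℝ :=
  Real.sqrt (q / (n : ℝ) ^ r + 2 * neuP12 q r n)

/-- In the Neumann example (α = 0, β = 1, R = 1, Qⁿ = q/nʳ · I),
the Riccati entry `P₂₂(n) = √(q/nʳ + 2P₁₂(n))` satisfies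
`0 < P₂₂(n) ≤ √(2q) · n^{−r/2}`. -/
theorem neumann_example_P22_bound (q r : ℝ) (hq : 0 < q) (hr : 1 < r)
    (n : ℕ) (hn : 1 ≤ n) :
    0 < neuP22 q r n ∧
    neuP22 q r n ≤ Real.sqrt (2 * q) * (n : ℝ) ^ (-(r / 2)) := by
  have hn1 : (1 : ℝ) ≤ (n : ℝ) := by exact_mod_cast hn
  have hn0 : (0 : ℝ) < (n : ℝ) := by linarith
  have hp : 0 < (n : ℝ) ^ r := Real.rpow_pos_of_pos hn0 r
  have hc : 0 < q / (n : ℝ) ^ r := div_pos hq hp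
  have ha : 1 ≤ (n : ℝ) ^ 2 * Real.pi ^ 2 := by
    have h1 : 1 ≤ (n : ℝ) ^ 2 := one_le_pow₀ hn1
    have h2 : 1 ≤ Real.pi ^ 2 := one_le_pow₀ (by linarith [Real.pi_gt_three])
    nlinarith
  have hR : Real.sqrt (2 * q) * (n : ℝ) ^ (-(r / 2))
      = Real.sqrt (2 * (q / (n : ℝ) ^ r)) := by
    have h3 : (n : ℝ) ^ (-(r / 2)) = Real.sqrt (((n : ℝ) ^ r)⁻¹) := by
      rw [Real.sqrt_eq_rpow, ← Real.rpow_neg hn0.le, ← Real.rpow_mul hn0.le]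
      congr 1
      ring
    rw [h3, ← Real.sqrt_mul (by positivity)]
    congr 1
    ring
  have e : (n : ℝ) ^ 4 * Real.pi ^ 4 = ((n : ℝ) ^ 2 * Real.pi ^ 2) ^ 2 := by ring
  rw [hR]
  unfold neuP22 neuP12
  rw [e]
  generalize (n : ℝ) ^ 2 * Real.pi ^ 2 = a at *
  generalize q / (n : ℝ) ^ r = c at *
  have l : a ≤ Real.sqrt (a ^ 2 + c) := Real.le_sqrt_of_sq_le (by linarith)
  have u : Real.sqrt (a ^ 2 + c) ≤ a + c / 2 := by
    rw [Real.sqrt_le_left (by linarith)]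
    nlinarith [sq_nonneg c]
  exact ⟨Real.sqrt_pos.2 (by linarith), Real.sqrt_le_sqrt (by linarith)⟩
end

section
/- Fix real numbers q > 0 and r > 1. With P₁₂(n) = √(n⁴π⁴ + q/nʳ) − n²π², P₂₂(n) = √(q/nʳ + 2P₁₂(n)) and P₁₁(n) = (n²π² + P₁₂(n))P₂₂(n), there exists a constant C > 0 such that 0 < P₁₁(n) ≤ C · n^{2−r/2} for every integer n ≥ 1. -/
/-- `P₁₁(n)` in the Neumann boundary control example. -/
noncomputable def neuP11 (q r : ℝ) (n : ℕ) : ℝ :=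
  ((n : ℝ) ^ 2 * Real.pi ^ 2 + neuP12 q r n) * neuP22 q r n

/-- In the Neumann example there is a constant `C > 0` such that
`0 < P₁₁(n) ≤ C · n^{2−r/2}` for every `n ≥ 1`. -/
theorem neumann_example_P11_bound (q r : ℝ) (hq : 0 < q) (hr : 1 < r) :
    ∃ C : ℝ, 0 < C ∧ ∀ n : ℕ, 1 ≤ n →
      0 < neuP11 q r n ∧ neuP11 q r n ≤ C * (n : ℝ) ^ ((2 : ℝ) - r / 2) := by
  refine ⟨(Real.pi ^ 2 + q) * Real.sqrt (3 * q), by positivity, ?_⟩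
  intro n hn
  have hn1 : (1 : ℝ) ≤ n := by exact_mod_cast hn
  have hn0 : (0 : ℝ) < n := by linarith
  have hX : (1 : ℝ) ≤ (n : ℝ) ^ r := Real.one_le_rpow hn1 (by linarith)
  have hX0 : (0 : ℝ) < (n : ℝ) ^ r := by linarith
  have hn2 : (1 : ℝ) ≤ (n : ℝ) ^ 2 := by nlinarith
  have hpi : (1 : ℝ) ≤ Real.pi ^ 2 := by nlinarith [Real.pi_gt_three]
  have ha : (1 : ℝ) ≤ (n : ℝ) ^ 2 * Real.pi ^ 2 := by nlinarith
  have he : 0 < q / (n : ℝ) ^ r := by positivity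
  have heq : q / (n : ℝ) ^ r ≤ q := div_le_self hq.le hX
  have hrp : (n : ℝ) ^ ((2 : ℝ) - r / 2) = (n : ℝ) ^ 2 / Real.sqrt ((n : ℝ) ^ r) := by
    rw [Real.rpow_sub hn0, Real.sqrt_eq_rpow, ← Real.rpow_mul hn0.le]
    norm_num
    congr 2
    ring
  have h4 : (n : ℝ) ^ 4 * Real.pi ^ 4 = ((n : ℝ) ^ 2 * Real.pi ^ 2) ^ 2 := by ring
  have hs3 : Real.sqrt (3 * (q / (n : ℝ) ^ r))
      = Real.sqrt (3 * q) / Real.sqrt ((n : ℝ) ^ r) := by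
    rw [← Real.sqrt_div (by positivity), mul_div_assoc]
  have hlo : 0 < neuP12 q r n := by
    unfold neuP12
    rw [h4, sub_pos]
    apply Real.lt_sqrt_of_sq_lt
    linarith
  have hhi : neuP12 q r n ≤ q / (n : ℝ) ^ r := by
    unfold neuP12
    rw [h4, sub_le_iff_le_add]
    apply Real.sqrt_le_iff.mpr
    constructor
    · linarith
    · nlinarith
  constructor
  · unfold neuP11 neuP22
    apply mul_pos
    · linarith
    · apply Real.sqrt_pos.mpr
      linarith
  · have h22 : neuP22 q r n ≤ Real.sqrt (3 * q) / Real.sqrt ((n : ℝ) ^ r) := by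
      rw [← hs3]
      unfold neuP22
      apply Real.sqrt_le_sqrt
      linarith
    have h1 : (n : ℝ) ^ 2 * Real.pi ^ 2 + neuP12 q r n ≤ (n : ℝ) ^ 2 * (Real.pi ^ 2 + q) := by
      nlinarith
    rw [hrp]
    unfold neuP11
    calc _ ≤ ((n : ℝ) ^ 2 * (Real.pi ^ 2 + q)) * (Real.sqrt (3 * q) / Real.sqrt ((n : ℝ) ^ r)) :=
          mul_le_mul h1 h22 (Real.sqrt_nonneg _) (by positivity)
      _ = _ := by ring
end

section
/- Fix a real number q > 0 and set P₁₂(n) = √(n⁴π⁴ + q/nʳ) − n²π², P₂₂(n) = √(q/nʳ + 2P₁₂(n)), and P₁₁(n) = (n²π² + P₁₂(n))P₂₂(n) for integers n ≥ 1. (a) If r > 6, then the series Σ_{n=1}^∞ P₁₁(n) converges, so for every (x₁,x₂) ∈ [0,1]² the series Σ_{n=1}^∞ P₁₁(n) cos(nπx₁) cos(nπx₂) defining the (1,1)-entry of the optimal-cost kernel converges absolutely. (b) If r > 2, then the series Σ_{n=1}^∞ P₁₂(n) and Σ_{n=1}^∞ P₂₂(n) converge, so for every x ∈ [0,1] the series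 defining the optimal feedback gain, K(x) = −Σ_{n=1}^∞ (P₁₂(n), P₂₂(n)) cos(nπx), converges absolutely. -/
theorem neu_aux (q : ℝ) (hq : 0 < q) (r : ℝ) (n : ℕ) :
    0 ≤ neuP12 q r (n + 1) ∧ neuP12 q r (n + 1) ≤ q * (1 / ((n + 1 : ℕ) : ℝ) ^ r) ∧
    0 ≤ neuP22 q r (n + 1) ∧
    neuP22 q r (n + 1) ≤ Real.sqrt (2 * q) * (1 / ((n + 1 : ℕ) : ℝ) ^ (r / 2)) := by
  have hm : (1 : ℝ) ≤ ((n + 1 : ℕ) : ℝ) := by push_cast; linarith [(Nat.cast_nonneg n : (0:ℝ) ≤ n)]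
  unfold neuP22 neuP12
  generalize ((n + 1 : ℕ) : ℝ) = m at hm ⊢
  have hm0 : 0 < m := by linarith
  have he : 0 < q / m ^ r := by positivity
  have hee : q * (1 / m ^ r) = q / m ^ r := by ring
  have hpi : 1 ≤ Real.pi ^ 2 := by nlinarith [Real.pi_gt_three]
  have ha : 1 ≤ m ^ 2 * Real.pi ^ 2 := by nlinarith
  have ha4 : m ^ 4 * Real.pi ^ 4 = (m ^ 2 * Real.pi ^ 2) ^ 2 := by ring
  have hs : Real.sqrt (2 * q) * (1 / m ^ (r / 2)) = Real.sqrt (2 * (q / m ^ r)) := by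
    have h1 : m ^ r = (m ^ (r / 2)) ^ 2 := by
      rw [← Real.rpow_natCast, ← Real.rpow_mul hm0.le]; norm_num
    have h2 : 2 * (q / m ^ r) = 2 * q / m ^ r := by ring
    rw [h2, Real.sqrt_div (by positivity), h1, Real.sqrt_sq (by positivity)]
    ring
  rw [hee, hs, ha4]
  generalize q / m ^ r = e at he ⊢
  generalize m ^ 2 * Real.pi ^ 2 = a at ha ⊢
  have h1 : a ≤ Real.sqrt (a ^ 2 + e) := Real.le_sqrt_of_sq_le (by linarith)
  have h2 : Real.sqrt (a ^ 2 + e) ≤ a + e / 2 := by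
    rw [Real.sqrt_le_left (by linarith)]
    nlinarith [sq_nonneg e]
  refine ⟨by linarith, by linarith, Real.sqrt_nonneg _, Real.sqrt_le_sqrt (by linarith)⟩

theorem neu_aux11 (q : ℝ) (hq : 0 < q) (r : ℝ) (hr : 0 ≤ r) (n : ℕ) :
    0 ≤ neuP11 q r (n + 1) ∧ neuP11 q r (n + 1) ≤
      ((Real.pi ^ 2 + q) * Real.sqrt (2 * q)) * (1 / ((n + 1 : ℕ) : ℝ) ^ (r / 2 - 2)) := by
  obtain ⟨h1, h2, h3, h4⟩ := neu_aux q hq r n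
  have hm : (1 : ℝ) ≤ ((n + 1 : ℕ) : ℝ) := by push_cast; linarith [(Nat.cast_nonneg n : (0:ℝ) ≤ n)]
  unfold neuP11
  generalize neuP12 q r (n + 1) = A at *
  generalize neuP22 q r (n + 1) = B at *
  generalize ((n + 1 : ℕ) : ℝ) = m at *
  have hm0 : 0 < m := by linarith
  have h5 : 1 / m ^ r ≤ 1 := by
    rw [div_le_one (by positivity)]
    exact Real.one_le_rpow hm hr
  have h6 : A ≤ q * m ^ 2 := by
    have : q * (1 / m ^ r) ≤ q * 1 := by gcongr
    have h8 : q * 1 ≤ q * m ^ 2 := by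
      gcongr
      exact one_le_pow₀ hm
    linarith
  have h7 : 1 / m ^ (r / 2 - 2) = m ^ 2 * (1 / m ^ (r / 2)) := by
    rw [Real.rpow_sub hm0, Real.rpow_two]; field_simp
  refine ⟨by positivity, ?_⟩
  rw [h7]
  calc (m ^ 2 * Real.pi ^ 2 + A) * B
      ≤ (m ^ 2 * Real.pi ^ 2 + q * m ^ 2) * (Real.sqrt (2 * q) * (1 / m ^ (r / 2))) := by gcongr
    _ = _ := by ring

theorem neu_sum (C s : ℝ) (hs : 1 < s) :
    Summable (fun n : ℕ => C * (1 / ((n + 1 : ℕ) : ℝ) ^ s)) :=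
  ((summable_nat_add_iff 1).2 (Real.summable_one_div_nat_rpow.2 hs)).mul_left C

theorem neu_cos {f : ℕ → ℝ} (h0 : ∀ n, 0 ≤ f n) (hf : Summable f) (g : ℕ → ℝ) :
    Summable (fun n => |f n * Real.cos (g n)|) := by
  refine Summable.of_nonneg_of_le (fun n => abs_nonneg _) (fun n => ?_) hf
  rw [abs_mul, abs_of_nonneg (h0 n)]
  exact mul_le_of_le_one_right (h0 n) (Real.abs_cos_le_one _)

/-- In the Neumann example: (a) if `r > 6` the series
`Σ_{n≥1} P₁₁(n)` converges, so the series for the (1,1)-entry of the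
optimal-cost kernel `Σ_{n≥1} P₁₁(n) cos(nπx₁) cos(nπx₂)` converges absolutely
on `[0,1]²`; (b) if `r > 2` the series `Σ_{n≥1} P₁₂(n)` and `Σ_{n≥1} P₂₂(n)`
converge, so the series for the optimal feedback gain
`K(x) = −Σ_{n≥1} (P₁₂(n), P₂₂(n)) cos(nπx)` converges absolutely on `[0,1]`. -/
theorem neumann_example_series_converge (q : ℝ) (hq : 0 < q) (r : ℝ) :
    (6 < r →
      Summable (fun n : ℕ => neuP11 q r (n + 1)) ∧
      ∀ x₁ ∈ Set.Icc (0 : ℝ) 1, ∀ x₂ ∈ Set.Icc (0 : ℝ) 1,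
        Summable (fun n : ℕ =>
          |neuP11 q r (n + 1) * Real.cos (((n : ℝ) + 1) * Real.pi * x₁) *
            Real.cos (((n : ℝ) + 1) * Real.pi * x₂)|)) ∧
    (2 < r →
      Summable (fun n : ℕ => neuP12 q r (n + 1)) ∧
      Summable (fun n : ℕ => neuP22 q r (n + 1)) ∧
      ∀ x ∈ Set.Icc (0 : ℝ) 1,
        Summable (fun n : ℕ =>
          |neuP12 q r (n + 1) * Real.cos (((n : ℝ) + 1) * Real.pi * x)|) ∧
        Summable (fun n : ℕ =>
          |neuP22 q r (n + 1) * Real.cos (((n : ℝ) + 1) * Real.pi * x)|)) := by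
  constructor
  · intro hr
    have h0 := fun n => (neu_aux11 q hq r (by linarith) n).1
    have hs : Summable (fun n : ℕ => neuP11 q r (n + 1)) :=
      Summable.of_nonneg_of_le h0 (fun n => (neu_aux11 q hq r (by linarith) n).2)
        (neu_sum _ _ (by linarith))
    refine ⟨hs, fun x₁ _ x₂ _ => ?_⟩
    have h := neu_cos h0 hs (fun n : ℕ => ((n : ℝ) + 1) * Real.pi * x₁)
    have h' := neu_cos (fun n => abs_nonneg _) h (fun n : ℕ => ((n : ℝ) + 1) * Real.pi * x₂)
    simpa only [abs_mul, abs_abs] using h'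
  · intro hr
    have h0 := fun n => (neu_aux q hq r n).1
    have h0' := fun n => (neu_aux q hq r n).2.2.1
    have hs : Summable (fun n : ℕ => neuP12 q r (n + 1)) :=
      Summable.of_nonneg_of_le h0 (fun n => (neu_aux q hq r n).2.1) (neu_sum _ _ (by linarith))
    have hs' : Summable (fun n : ℕ => neuP22 q r (n + 1)) :=
      Summable.of_nonneg_of_le h0' (fun n => (neu_aux q hq r n).2.2.2) (neu_sum _ _ (by linarith))
    exact ⟨hs, hs', fun x _ => ⟨neu_cos h0 hs _, neu_cos h0' hs' _⟩⟩
end
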